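/- Let p, q, r, u, v be positive integers and set w = p + q + r + u + v. Then there exist rational numbers c_k and d_k (0 ≤ k ≤ ⌊(w+1)/2⌋) depending only on (p,q,r,u,v) such that for every complex number s with Re s > 1: ζ₂(p,s,q,r,u,v; G₂) + (−1)^p ζ₂(p,q,s,r,v,u; G₂) + (−1)^{p+q} ζ₂(v,q,r,s,p,u; G₂) + (−1)^{p+q+v} ζ₂(v,r,q,s,u,p; G₂) + (−1)^{p+q+r+v} ζ₂(u,r,s,q,v,p; G₂) + (−1)^{p+q+r+u+v} ζ₂(u,s,r,q,p,v; G₂) = ∑_{k=0}^{⌊(w+1)/2⌋} ζ(2k)·( c_k·ζ(s+w−2k) + d_k·φ(s+w−2k) ). -/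

import Mathlib

open Complex Finset

/-- The zeta-function of the root system `G₂` with complex exponents. -/
noncomputable def zetaG2C (s₁ s₂ s₃ s₄ s₅ s₆ : ℂ) : ℂ :=
  ∑' (m : ℕ+) (n : ℕ+),
    1 / (((m : ℕ) : ℂ) ^ s₁ * ((n : ℕ) : ℂ) ^ s₂ * (((m : ℕ) : ℂ) + ((n : ℕ) : ℂ)) ^ s₃ *
      (((m : ℕ) : ℂ) + 2 * ((n : ℕ) : ℂ)) ^ s₄ * (((m : ℕ) : ℂ) + 3 * ((n : ℕ) : ℂ)) ^ s₅ *
      (2 * ((m : ℕ) : ℂ) + 3 * ((n : ℕ) : ℂ)) ^ s₆)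

/-- `φ(s) = (2^{1-s} - 1) ζ(s)`. -/
noncomputable def phiC (s : ℂ) : ℂ := ((2 : ℂ) ^ (1 - s) - 1) * riemannZeta s

/-!
Sum `N ^ (-s) * M ^ (-p) * (M + N) ^ (-q) * (M + 2 * N) ^ (-r) * (M + 3 * N) ^ (-u) *
(2 * M + 3 * N) ^ (-v)` over the lattice points with `N > 0` where none of the forms vanishes.
Their zeros cut the half-plane `N > 0` into six Weyl chambers, whose contributions are the six zeta
values of the relation, up to sign.

Now sum over `M` first. Partial fractions, which only bring in powers of `1 / N`, leave powers of a
single form, taken at the lattice points off the walls, the zeros of the forms. Its odd powers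
cancel in the symmetric sum over `M`, while the `2k`-th powers contribute `ζ(2k)` times a rational
number depending only on the parity of `N`. Putting back the points on the walls costs, for each
wall, a rational multiple of a power of `1 / N`, again depending on the parity of `N`; since
`ζ(0) = -1/2` this fits the term `k = 0`. Finally `∑ N ^ (-z) = ζ(z)` and
`∑ (-1) ^ N * N ^ (-z) = φ(z)`.
-/

open Filter SummationFilter Topology

section SymmetricSums

variable {E : Type*} [AddCommGroup E]

lemma sum_Icc_neg_add_one_sub (h : ℤ → E) (K : ℕ) :
    ∑ M ∈ Icc (-(K : ℤ)) K, (h (M + 1) - h M) = h (K + 1) - h (-K) := by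
  induction K with
  | zero => simp
  | succ K ih =>
    rw [Nat.cast_add_one, Icc_succ_succ, sum_union (by simp), sum_pair (by lia), ih,
      show -((K : ℤ) + 1) + 1 = -K by ring]
    abel

variable [TopologicalSpace E] [IsTopologicalAddGroup E] {h : ℤ → E}

lemma hasSum_symmetricIcc_add_one_sub (hh : Tendsto h cofinite (𝓝 0)) :
    HasSum (fun M ↦ h (M + 1) - h M) 0 (symmetricIcc ℤ) := by
  rw [Int.cofinite_eq, tendsto_sup] at hh
  simp only [hasSum_symmetricIcc_iff, sum_Icc_neg_add_one_sub]
  have htop : Tendsto (fun K : ℕ ↦ (K : ℤ)) atTop atTop := tendsto_natCast_atTop_atTop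
  simpa using (hh.2.comp (tendsto_atTop_add_const_right _ 1 htop)).sub
    (hh.1.comp (tendsto_neg_atTop_atBot.comp htop))

lemma hasSum_symmetricIcc_add_sub (hh : Tendsto h cofinite (𝓝 0)) (c : ℤ) :
    HasSum (fun M ↦ h (M + c) - h M) 0 (symmetricIcc ℤ) := by
  have hstep (c : ℤ) : HasSum (fun M ↦ h (M + c + 1) - h (M + c)) 0 (symmetricIcc ℤ) := by
    have hc : Tendsto (fun M ↦ h (M + c)) cofinite (𝓝 0) :=
      hh.comp (add_left_injective c).tendsto_cofinite
    simpa only [add_right_comm] using hasSum_symmetricIcc_add_one_sub hc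
  induction c with
  | zero => simp
  | succ c ih => simpa [add_assoc] using (hstep c).add ih
  | pred c ih => simpa [add_assoc] using ih.sub (hstep (-c - 1))

lemma hasSum_symmetricIcc_zero_of_antisymm [Module ℝ E] [ContinuousConstSMul ℝ E]
    (hh : Tendsto h cofinite (𝓝 0)) {t : ℤ} (hanti : ∀ M, h (t - M) = -h M) :
    HasSum h 0 (symmetricIcc ℤ) := by
  have hreflect (K : ℕ) : ∑ M ∈ Icc (-(K : ℤ)) K, h (M + t) = -∑ M ∈ Icc (-(K : ℤ)) K, h M := by
    rw [← sum_neg_distrib]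
    refine sum_equiv (Equiv.neg ℤ) (fun M ↦ ?_) fun M _ ↦ ?_
    · simp only [mem_Icc, Equiv.neg_apply]
      lia
    · rw [Equiv.neg_apply, ← hanti, sub_neg_eq_add, add_comm]
  have hdiff := (hasSum_symmetricIcc_add_sub hh t).const_smul (-2⁻¹ : ℝ)
  rw [smul_zero, hasSum_symmetricIcc_iff] at hdiff
  rw [hasSum_symmetricIcc_iff]
  refine hdiff.congr fun K ↦ ?_
  rw [← smul_sum, sum_sub_distrib, hreflect]
  module

end SymmetricSums

section ZetaSums

lemma hasSum_comp_of_isCompl_range {α β γ : Type*} [AddCommGroup α] [TopologicalSpace α]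
    [IsTopologicalAddGroup α] {f : β → α} {a b : α} {g₁ g₂ : γ → β} (hg₁ : g₁.Injective)
    (hg₂ : g₂.Injective) (hcompl : IsCompl (Set.range g₁) (Set.range g₂)) (hf : HasSum f a)
    (hf₁ : HasSum (f ∘ g₁) b) : HasSum (f ∘ g₂) (a - b) := by
  rw [← hg₂.hasSum_range_iff, ← hcompl.compl_eq]
  refine HasSum.hasSum_compl_iff (hg₁.hasSum_range_iff.2 hf₁) |>.2 ?_
  rwa [add_sub_cancel]

lemma tendsto_intCast_inv_pow_cofinite {n : ℕ} (hn : n ≠ 0) :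
    Tendsto (fun x : ℤ ↦ ((x : ℂ)⁻¹) ^ n) cofinite (𝓝 0) := by
  have hcast : Tendsto ((↑) : ℤ → ℂ) cofinite (Bornology.cobounded ℂ) := by
    rw [← tendsto_norm_atTop_iff_cobounded, Int.cofinite_eq]
    simp only [norm_intCast]
    exact (tendsto_abs_atBot_atTop.comp (tendsto_intCast_atBot_iff.2 tendsto_id)).sup
      (tendsto_abs_atTop_atTop.comp tendsto_intCast_atTop_atTop)
  simpa [hn] using (tendsto_inv₀_cobounded.comp hcast).pow n

lemma hasSum_intCast_inv_pow {k : ℕ} (hk : k ≠ 0) :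
    HasSum (fun x : ℤ ↦ ((x : ℂ)⁻¹) ^ (2 * k)) (2 * riemannZeta (2 * k)) := by
  have hsum : Summable fun x : ℤ ↦ ((x : ℂ)⁻¹) ^ (2 * k) := by
    simpa using ofRealCLM.summable (Real.summable_one_div_int_pow.2 (show 1 < 2 * k by lia))
  rw [hsum.hasSum_iff]
  simpa using (two_mul_riemannZeta_eq_tsum_int_inv_pow_of_even (k := 2 * k) (by lia) (by simp)).symm

lemma hasSum_two_mul_inv_pow {k : ℕ} (hk : k ≠ 0) :
    HasSum (fun M : ℤ ↦ (((2 * M : ℤ) : ℂ)⁻¹) ^ (2 * k))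
      (2⁻¹ ^ (2 * k) * (2 * riemannZeta (2 * k))) := by
  simpa only [Int.cast_mul, Int.cast_ofNat, mul_inv, mul_pow] using
    (hasSum_intCast_inv_pow hk).mul_left ((2⁻¹ : ℂ) ^ (2 * k))

lemma hasSum_two_mul_add_one_inv_pow {k : ℕ} (hk : k ≠ 0) :
    HasSum (fun M : ℤ ↦ (((2 * M + 1 : ℤ) : ℂ)⁻¹) ^ (2 * k))
      (2 * riemannZeta (2 * k) - 2⁻¹ ^ (2 * k) * (2 * riemannZeta (2 * k))) :=
  (hasSum_comp_of_isCompl_range (mul_right_injective₀ (two_ne_zero' ℤ))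
    ((add_left_injective 1).comp (mul_right_injective₀ (two_ne_zero' ℤ)))
    (by simpa [Function.comp_def] using Int.isCompl_even_odd) (hasSum_intCast_inv_pow hk)
    (hasSum_two_mul_inv_pow hk) :)

lemma hasSum_mul_add_inv_pow {a : ℤ} (ha : a = 1 ∨ a = 2) {k : ℕ} (hk : k ≠ 0) (c : ℤ) :
    HasSum (fun M : ℤ ↦ (((a * M + c : ℤ) : ℂ)⁻¹) ^ (2 * k))
      (riemannZeta (2 * k) *
        (if a ∣ c then 2 * (a⁻¹ : ℚ) ^ (2 * k) else 2 - 2 * (a⁻¹ : ℚ) ^ (2 * k) : ℚ)) := by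
  rcases ha with rfl | rfl
  · convert (Equiv.addRight c).hasSum_iff.2 (hasSum_intCast_inv_pow hk) using 1
    · simp only [Function.comp_def, Equiv.coe_addRight, one_mul]
    · simp [mul_comm]
  obtain ⟨t, rfl | rfl⟩ := Int.even_or_odd' c
  · rw [if_pos (dvd_mul_right 2 t)]
    convert (Equiv.addRight t).hasSum_iff.2 (hasSum_two_mul_inv_pow hk) using 1
    · simp only [Function.comp_def, Equiv.coe_addRight, mul_add]
    · push_cast
      ring
  · rw [if_neg (by lia)]
    convert (Equiv.addRight t).hasSum_iff.2 (hasSum_two_mul_add_one_inv_pow hk) using 1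
    · simp only [Function.comp_def, Equiv.coe_addRight, mul_add, add_assoc]
    · push_cast
      ring

lemma hasSum_one_div_nat_cpow {z : ℂ} (hz : 1 < z.re) :
    HasSum (fun n : ℕ ↦ 1 / (n : ℂ) ^ z) (riemannZeta z) := by
  rw [zeta_eq_tsum_one_div_nat_cpow hz]
  exact (summable_one_div_nat_cpow.2 hz).hasSum

lemma hasSum_neg_one_pow_mul_one_div_nat_cpow {z : ℂ} (hz : 1 < z.re) :
    HasSum (fun n : ℕ ↦ (-1) ^ n * (1 / (n : ℂ) ^ z)) (phiC z) := by
  have hall := hasSum_one_div_nat_cpow hz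
  have heven : HasSum (fun n : ℕ ↦ 1 / ((2 * n : ℕ) : ℂ) ^ z) (2 ^ (-z) * riemannZeta z) := by
    have hmul (n : ℕ) : 1 / ((2 * n : ℕ) : ℂ) ^ z = 2 ^ (-z) * (1 / (n : ℂ) ^ z) := by
      rw [Nat.cast_mul, natCast_mul_natCast_cpow, Nat.cast_ofNat, cpow_neg, one_div,
        one_div, mul_inv]
    simpa only [hmul] using hall.mul_left ((2 : ℂ) ^ (-z))
  have hodd := hasSum_comp_of_isCompl_range (mul_right_injective₀ (two_ne_zero' ℕ))
    ((add_left_injective 1).comp (mul_right_injective₀ (two_ne_zero' ℕ)))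
    (by simpa [Function.comp_def] using Nat.isCompl_even_odd) hall heven
  have hphi : phiC z = 2 ^ (-z) * riemannZeta z - (riemannZeta z - 2 ^ (-z) * riemannZeta z) := by
    rw [phiC, sub_eq_add_neg 1 z, cpow_add _ _ two_ne_zero, cpow_one]
    ring
  rw [hphi, sub_eq_add_neg]
  refine HasSum.even_add_odd ?_ ?_
  · simpa using heven
  · simpa [pow_succ] using hodd.neg

end ZetaSums

/-- The families `g : ℕ+ → ℤ → ℂ` whose symmetric sums over `M` are homogeneous of weight `w`: a
rational combination of `ζ(2k) N ^ (2k - w)` for `k < B` and `2k ≤ w`, with coefficients depending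
on `N` only through its parity. -/
def zetaSums (B w : ℕ) : Submodule ℚ (ℕ+ → ℤ → ℂ) where
  carrier := {g | ∃ c d : ℕ → ℚ, (∀ k, w < 2 * k → c k = 0 ∧ d k = 0) ∧
    ∀ N : ℕ+, HasSum (g N) (∑ k ∈ range B, riemannZeta (2 * k) *
      ((c k + d k * (-1) ^ (N : ℕ)) * (N : ℂ) ^ (2 * k) * (N : ℂ)⁻¹ ^ w)) (symmetricIcc ℤ)}
  zero_mem' := ⟨0, 0, by simp, fun N ↦ by convert hasSum_zero <;> simp⟩
  add_mem' := by
    rintro g₁ g₂ ⟨c₁, d₁, hzero₁, hsum₁⟩ ⟨c₂, d₂, hzero₂, hsum₂⟩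
    refine ⟨c₁ + c₂, d₁ + d₂, fun k hk ↦ by simp [hzero₁ k hk, hzero₂ k hk], fun N ↦ ?_⟩
    convert (hsum₁ N).add (hsum₂ N) using 1
    · rfl
    rw [← sum_add_distrib]
    refine sum_congr rfl fun k _ ↦ ?_
    simp only [Pi.add_apply, Rat.cast_add]
    ring
  smul_mem' := by
    rintro a g ⟨c, d, hzero, hsum⟩
    refine ⟨a • c, a • d, fun k hk ↦ by simp [hzero k hk], fun N ↦ ?_⟩
    convert (hsum N).const_smul a using 1
    · rfl
    rw [smul_sum]
    refine sum_congr rfl fun k _ ↦ ?_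
    simp only [Pi.smul_apply, smul_eq_mul, Rat.smul_def, Rat.cast_mul]
    ring

section ZetaSumsMembership

variable {B w : ℕ} {g : ℕ+ → ℤ → ℂ}

lemma mem_zetaSums_of_hasSum {k : ℕ} (hkB : k < B) (hkw : 2 * k ≤ w) (α β : ℚ)
    (hg : ∀ N : ℕ+, HasSum (g N) (riemannZeta (2 * k) *
      ((α + β * (-1) ^ (N : ℕ)) * (N : ℂ) ^ (2 * k) * (N : ℂ)⁻¹ ^ w)) (symmetricIcc ℤ)) :
    g ∈ zetaSums B w := by
  refine ⟨Pi.single k α, Pi.single k β, fun j hj ↦ ?_, fun N ↦ ?_⟩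
  · have hjk : j ≠ k := by lia
    simp [hjk]
  · rw [sum_eq_single_of_mem k (mem_range.2 hkB) fun j _ hj ↦ by simp [hj]]
    simpa using hg N

lemma inv_mul_mem_zetaSums (hg : g ∈ zetaSums B w) :
    (fun N M ↦ (N : ℂ)⁻¹ * g N M : ℕ+ → ℤ → ℂ) ∈ zetaSums B (w + 1) := by
  obtain ⟨c, d, hzero, hsum⟩ := hg
  refine ⟨c, d, fun k hk ↦ hzero k (by lia), fun N ↦ ?_⟩
  simpa only [mul_sum, pow_succ, mul_comm, mul_left_comm, mul_assoc] using
    (hsum N).mul_left (N : ℂ)⁻¹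

lemma exists_rat_ite_dvd_eq {a : ℤ} (ha : a = 1 ∨ a = 2) (b : ℤ) (x y : ℚ) :
    ∃ α β : ℚ, ∀ n : ℕ, (if a ∣ b * n then x else y) = α + β * (-1) ^ n := by
  by_cases hdvd : a ∣ b
  · exact ⟨x, 0, fun n ↦ by simp [hdvd.mul_right]⟩
  obtain rfl : a = 2 := ha.resolve_left fun h ↦ hdvd (h ▸ one_dvd b)
  refine ⟨(x + y) / 2, (x - y) / 2, fun n ↦ ?_⟩
  rcases n.even_or_odd with hn | hn
  · rw [if_pos (dvd_mul_of_dvd_right (mod_cast hn.two_dvd) b), hn.neg_one_pow]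
    ring
  · rw [if_neg, hn.neg_one_pow]
    · ring
    · rw [Int.prime_two.dvd_mul, not_or]
      exact ⟨hdvd, mod_cast hn.not_two_dvd_nat⟩

end ZetaSumsMembership

/-- The linear form `a M + b N` with coefficients `L = (a, b)`. -/
def linearForm (L : ℤ × ℤ) (N : ℕ+) (M : ℤ) : ℤ := L.1 * M + L.2 * N

/-- The inverse of the product of the forms in `s`, at the points of the lattice off the walls: it
is cut off to `0` where a form in `Φ` vanishes. -/
noncomputable def reciprocalProd (Φ : Finset (ℤ × ℤ)) (s : Multiset (ℤ × ℤ)) (N : ℕ+) (M : ℤ) : ℂ :=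
  if ∀ L ∈ Φ, linearForm L N M ≠ 0 then (s.map fun L ↦ (linearForm L N M : ℂ)⁻¹).prod else 0

section ReciprocalProd

variable {B : ℕ} {Φ : Finset (ℤ × ℤ)} {s : Multiset (ℤ × ℤ)}

lemma linearForm_sub {L : ℤ × ℤ} {N : ℕ+} {t M : ℤ} (ht : L.1 * t = -2 * (L.2 * N)) :
    linearForm L N (t - M) = -linearForm L N M := by
  simp only [linearForm]
  linear_combination ht

lemma linearForm_injective {L : ℤ × ℤ} (hL : L.1 ≠ 0) (N : ℕ+) : (linearForm L N).Injective :=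
  fun M M' h ↦ by simpa [linearForm, hL] using h

lemma hasSum_inv_linearForm_pow_of_odd {L : ℤ × ℤ} (hL : L.1 = 1 ∨ L.1 = 2) {n : ℕ} (hn : Odd n)
    (N : ℕ+) : HasSum (fun M ↦ (linearForm L N M : ℂ)⁻¹ ^ n) 0 (symmetricIcc ℤ) := by
  obtain ⟨t, ht⟩ : ∃ t, L.1 * t = -2 * (L.2 * N) := by
    rcases hL with h | h
    · exact ⟨-2 * (L.2 * N), by rw [h, one_mul]⟩
    · exact ⟨-(L.2 * N), by rw [h]; ring⟩
  have hinj := linearForm_injective (L := L) (by lia) N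
  refine hasSum_symmetricIcc_zero_of_antisymm (t := t)
    ((tendsto_intCast_inv_pow_cofinite hn.pos.ne').comp hinj.tendsto_cofinite) fun M ↦ ?_
  simp only [linearForm_sub ht, Int.cast_neg, inv_neg, hn.neg_pow]

lemma inv_linearForm_pow_mem_zetaSums {L : ℤ × ℤ} (hL : L.1 = 1 ∨ L.1 = 2) {n : ℕ} (hn : n ≠ 0)
    (hnB : n < 2 * B) : (fun N M ↦ (linearForm L N M : ℂ)⁻¹ ^ n : ℕ+ → ℤ → ℂ) ∈ zetaSums B n := by
  rcases n.even_or_odd with hn_even | hn_odd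
  · obtain ⟨k, rfl⟩ := even_iff_exists_two_mul.1 hn_even
    have hk : k ≠ 0 := by lia
    obtain ⟨α, β, hαβ⟩ := exists_rat_ite_dvd_eq hL L.2
      (2 * (L.1⁻¹ : ℚ) ^ (2 * k)) (2 - 2 * (L.1⁻¹ : ℚ) ^ (2 * k))
    refine mem_zetaSums_of_hasSum (k := k) (by lia) le_rfl α β fun N ↦ ?_
    have hN : (N : ℂ) ^ (2 * k) * (N : ℂ)⁻¹ ^ (2 * k) = 1 := by
      rw [← mul_pow, mul_inv_cancel₀ (by simp), one_pow]
    have hsum := hasSum_mul_add_inv_pow hL hk (L.2 * N)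
    rw [hαβ] at hsum
    rw [mul_assoc _ (_ ^ _), hN, mul_one]
    exact_mod_cast hsum.mono_left LeAtTop.le_atTop
  · refine ⟨0, 0, by simp, fun N ↦ ?_⟩
    simpa using hasSum_inv_linearForm_pow_of_odd hL hn_odd N

lemma linearForm_eq_of_linearForm_eq_zero {L₀ : ℤ × ℤ} (hL₀ : L₀.1 ≠ 0) (L : ℤ × ℤ) {N : ℕ+}
    {M : ℤ} (hM : linearForm L₀ N M = 0) :
    (linearForm L N M : ℂ) = ((L.2 - L.1 * L₀.2 / L₀.1 : ℚ) : ℂ) * N := by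
  have hL₀' : (L₀.1 : ℂ) ≠ 0 := mod_cast hL₀
  have hM' : (L₀.1 * M + L₀.2 * N : ℂ) = 0 := mod_cast hM
  simp only [linearForm]
  push_cast
  field_simp
  linear_combination (L.1 : ℂ) * hM'

lemma exists_rat_reciprocalProd_eq_of_linearForm_eq_zero {L₀ : ℤ × ℤ} (hL₀ : L₀.1 ≠ 0)
    (Φ : Finset (ℤ × ℤ)) (s : Multiset (ℤ × ℤ)) :
    ∃ κ : ℚ, ∀ N M, linearForm L₀ N M = 0 →
      reciprocalProd Φ s N M = κ * (N : ℂ)⁻¹ ^ s.card := by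
  let slope (L : ℤ × ℤ) : ℚ := L.2 - L.1 * L₀.2 / L₀.1
  refine ⟨if ∀ L ∈ Φ, slope L ≠ 0 then (s.map fun L ↦ (slope L)⁻¹).prod else 0,
    fun N M hM ↦ ?_⟩
  have hL (L : ℤ × ℤ) : (linearForm L N M : ℂ) = (slope L : ℂ) * N :=
    linearForm_eq_of_linearForm_eq_zero hL₀ L hM
  have hreg (L : ℤ × ℤ) : linearForm L N M ≠ 0 ↔ slope L ≠ 0 := by
    rw [← Int.cast_ne_zero (α := ℂ), hL, mul_ne_zero_iff_right (by simp), Rat.cast_ne_zero]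
  simp only [reciprocalProd, hreg, hL]
  split_ifs
  · simp [Multiset.prod_map_mul, mul_comm]
  · simp

lemma ite_reciprocalProd_mem_zetaSums {L₀ : ℤ × ℤ} (hL₀ : L₀.1 = 1 ∨ L₀.1 = 2) (hB : 0 < B)
    (Φ : Finset (ℤ × ℤ)) (s : Multiset (ℤ × ℤ)) :
    (fun N M ↦ if linearForm L₀ N M = 0 then reciprocalProd Φ s N M else 0 : ℕ+ → ℤ → ℂ) ∈
      zetaSums B s.card := by
  have hL₀' : L₀.1 ≠ 0 := by lia
  obtain ⟨κ, hκ⟩ := exists_rat_reciprocalProd_eq_of_linearForm_eq_zero hL₀' Φ s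
  obtain ⟨α, β, hαβ⟩ := exists_rat_ite_dvd_eq hL₀ L₀.2 (-2 * κ) 0
  refine mem_zetaSums_of_hasSum (k := 0) hB (by simp) α β fun N ↦ ?_
  have hζ : riemannZeta (2 * (0 : ℕ)) = -1 / 2 := by simpa using riemannZeta_zero
  have hαβN : (α + β * (-1) ^ (N : ℕ) : ℂ) = ((α + β * (-1) ^ (N : ℕ) : ℚ) : ℂ) := by
    push_cast; rfl
  rw [hζ, hαβN, ← hαβ, mul_zero, pow_zero, mul_one]
  split_ifs with hdvd
  · obtain ⟨t, ht⟩ := hdvd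
    have hwall : linearForm L₀ N (-t) = 0 := by
      simp only [linearForm]
      linear_combination ht
    have hne (M : ℤ) (hM : M ≠ -t) : linearForm L₀ N M ≠ 0 := fun h ↦
      hM (linearForm_injective hL₀' N (h.trans hwall.symm))
    convert hasSum_single (-t) (fun M hM ↦ if_neg (hne M hM)) (symmetricIcc ℤ) using 1
    rw [if_pos hwall, hκ N _ hwall]
    push_cast
    ring
  · convert hasSum_zero using 2 with M
    · refine if_neg fun h ↦ hdvd ⟨-M, ?_⟩
      simp only [linearForm] at h
      linear_combination h
    · simp

lemma reciprocalProd_insert {L₀ : ℤ × ℤ} :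
    reciprocalProd (insert L₀ Φ) s = reciprocalProd Φ s -
      fun N M ↦ if linearForm L₀ N M = 0 then reciprocalProd Φ s N M else 0 := by
  ext N M
  by_cases h : linearForm L₀ N M = 0 <;>
    simp only [reciprocalProd, forall_mem_insert, Pi.sub_apply, h, ne_eq, not_true_eq_false,
      not_false_eq_true, false_and, true_and, if_true, if_false, sub_self, sub_zero]

lemma reciprocalProd_replicate_mem_zetaSums (hΦ : ∀ L ∈ Φ, L.1 = 1 ∨ L.1 = 2) {L : ℤ × ℤ}
    (hL : L.1 = 1 ∨ L.1 = 2) {n : ℕ} (hn : n ≠ 0) (hnB : n < 2 * B) :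
    reciprocalProd Φ (Multiset.replicate n L) ∈ zetaSums B n := by
  induction Φ using Finset.induction_on with
  | empty =>
    convert inv_linearForm_pow_mem_zetaSums hL hn hnB using 3 with N M
    simp [reciprocalProd]
  | insert L₀ Φ _ ih =>
    rw [forall_mem_insert] at hΦ
    rw [reciprocalProd_insert]
    refine sub_mem (ih hΦ.2) ?_
    simpa using ite_reciprocalProd_mem_zetaSums hΦ.1 (by lia) Φ (Multiset.replicate n L)

lemma reciprocalProd_cons_cons {L₁ L₂ : ℤ × ℤ} (hL₁ : L₁ ∈ Φ) (hL₂ : L₂ ∈ Φ)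
    (hdet : L₁.1 * L₂.2 ≠ L₁.2 * L₂.1) :
    reciprocalProd Φ (L₁ ::ₘ L₂ ::ₘ s) = fun N : ℕ+ ↦ fun M ↦ (N : ℂ)⁻¹ *
      (((L₁.1 : ℚ) / (L₁.1 * L₂.2 - L₁.2 * L₂.1)) • reciprocalProd Φ (L₁ ::ₘ s) -
        ((L₂.1 : ℚ) / (L₁.1 * L₂.2 - L₁.2 * L₂.1)) • reciprocalProd Φ (L₂ ::ₘ s)) N M := by
  ext N M
  simp only [reciprocalProd, Pi.sub_apply, Pi.smul_apply]
  split_ifs with hreg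
  swap
  · simp
  have h₁ : (linearForm L₁ N M : ℂ) ≠ 0 := mod_cast hreg L₁ hL₁
  have h₂ : (linearForm L₂ N M : ℂ) ≠ 0 := mod_cast hreg L₂ hL₂
  have hD : (L₁.1 * L₂.2 - L₁.2 * L₂.1 : ℂ) ≠ 0 := sub_ne_zero.2 (mod_cast hdet)
  have hlin : (L₁.1 * linearForm L₂ N M - L₂.1 * linearForm L₁ N M : ℂ) =
      (L₁.1 * L₂.2 - L₁.2 * L₂.1) * N := by
    simp only [linearForm]
    push_cast
    ring
  simp only [Multiset.map_cons, Multiset.prod_cons, Rat.smul_def]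
  push_cast
  have hN : (N : ℂ) ≠ 0 := by simp
  generalize (s.map fun L ↦ (linearForm L N M : ℂ)⁻¹).prod = P
  field_simp
  linear_combination -P * hlin

theorem reciprocalProd_mem_zetaSums (hΦ : ∀ L ∈ Φ, L.1 = 1 ∨ L.1 = 2)
    (hdet : (Φ : Set (ℤ × ℤ)).Pairwise fun L₁ L₂ ↦ L₁.1 * L₂.2 ≠ L₁.2 * L₂.1)
    (hs : ∀ L ∈ s, L ∈ Φ) (hs₀ : s ≠ 0) (hsB : s.card < 2 * B) :
    reciprocalProd Φ s ∈ zetaSums B s.card := by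
  induction s using Multiset.strongInductionOn with
  | ih s ih =>
  obtain ⟨L₁, hL₁⟩ := Multiset.exists_mem_of_ne_zero hs₀
  by_cases hall : ∀ L ∈ s, L = L₁
  · rw [Multiset.eq_replicate_card.2 hall, Multiset.card_replicate]
    exact reciprocalProd_replicate_mem_zetaSums hΦ (hΦ L₁ (hs L₁ hL₁)) (by simpa) hsB
  push Not at hall
  obtain ⟨L₂, hL₂, hne⟩ := hall
  obtain ⟨s', rfl⟩ := Multiset.exists_cons_of_mem hL₁
  obtain ⟨t, rfl⟩ := Multiset.exists_cons_of_mem ((Multiset.mem_cons.1 hL₂).resolve_left hne)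
  rw [Multiset.forall_mem_cons, Multiset.forall_mem_cons] at hs
  obtain ⟨hL₁Φ, hL₂Φ, ht⟩ := hs
  have hmem {L : ℤ × ℤ} (hL : L ∈ Φ) (hlt : L ::ₘ t < L₁ ::ₘ L₂ ::ₘ t) :
      reciprocalProd Φ (L ::ₘ t) ∈ zetaSums B (t.card + 1) := by
    rw [← Multiset.card_cons L]
    exact ih _ hlt (Multiset.forall_mem_cons.2 ⟨hL, ht⟩) (Multiset.cons_ne_zero)
      ((Multiset.card_lt_card hlt).trans hsB)
  rw [reciprocalProd_cons_cons hL₁Φ hL₂Φ (hdet hL₁Φ hL₂Φ hne.symm), Multiset.card_cons,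
    Multiset.card_cons]
  refine inv_mul_mem_zetaSums (sub_mem (Submodule.smul_mem _ _ ?_) (Submodule.smul_mem _ _ ?_))
  · exact hmem hL₁Φ (Multiset.cons_lt_cons_iff.2 (Multiset.lt_cons_self t L₂))
  · exact hmem hL₂Φ (Multiset.lt_cons_self _ L₁)

end ReciprocalProd

section Lattice

variable {Φ : Finset (ℤ × ℤ)} {s : Multiset (ℤ × ℤ)}

lemma norm_intCast_inv_le_one (x : ℤ) : ‖(x : ℂ)⁻¹‖ ≤ 1 := by
  obtain rfl | hx := eq_or_ne x 0
  · simp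
  · rw [norm_inv, norm_intCast]
    exact inv_le_one_of_one_le₀ (mod_cast Int.one_le_abs hx)

lemma norm_reciprocalProd_le (L₁ L₂ : ℤ × ℤ) (N : ℕ+) (M : ℤ) :
    ‖reciprocalProd Φ (L₁ ::ₘ L₂ ::ₘ s) N M‖ ≤
      ‖(linearForm L₁ N M : ℂ)⁻¹‖ ^ 2 + ‖(linearForm L₂ N M : ℂ)⁻¹‖ ^ 2 := by
  rw [reciprocalProd]
  split_ifs
  swap
  · rw [norm_zero]
    positivity
  have hs : ‖(s.map fun L ↦ (linearForm L N M : ℂ)⁻¹).prod‖ ≤ 1 := by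
    refine Multiset.prod_induction (‖·‖ ≤ 1) _ (fun x y hx hy ↦ ?_) (by simp) fun x hx ↦ ?_
    · exact (norm_mul_le x y).trans (mul_le_one₀ hx (norm_nonneg y) hy)
    · obtain ⟨L, -, rfl⟩ := Multiset.mem_map.1 hx
      exact norm_intCast_inv_le_one _
  rw [Multiset.map_cons, Multiset.map_cons, Multiset.prod_cons, Multiset.prod_cons, ← mul_assoc,
    norm_mul, norm_mul]
  refine (mul_le_of_le_one_right (by positivity) hs).trans ?_
  nlinarith [two_mul_le_add_sq ‖(linearForm L₁ N M : ℂ)⁻¹‖ ‖(linearForm L₂ N M : ℂ)⁻¹‖,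
    sq_nonneg ‖(linearForm L₁ N M : ℂ)⁻¹‖]

lemma summable_rpow_mul_inv_linearForm_sq {L : ℤ × ℤ} (hL : L.1 ≠ 0) {σ : ℝ} (hσ : 1 < σ) :
    Summable fun x : ℕ+ × ℤ ↦ (1 / (x.1 : ℝ) ^ σ) * ‖(linearForm L x.1 x.2 : ℂ)⁻¹‖ ^ 2 := by
  have hN : Summable fun N : ℕ+ ↦ 1 / (N : ℝ) ^ σ := by
    simpa only [Function.comp_def] using
      (Real.summable_one_div_nat_rpow.2 hσ).comp_injective PNat.coe_injective
  have hM : Summable fun M : ℤ ↦ ‖(M : ℂ)⁻¹‖ ^ 2 := by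
    simpa using Real.summable_one_div_int_pow.2 (show 1 < 2 by simp)
  have hprod : Summable fun y : ℕ+ × ℤ ↦ (1 / (y.1 : ℝ) ^ σ) * ‖(y.2 : ℂ)⁻¹‖ ^ 2 :=
    hN.mul_of_nonneg hM (fun _ ↦ by positivity) fun _ ↦ by positivity
  have hinj : (fun x : ℕ+ × ℤ ↦ (x.1, linearForm L x.1 x.2)).Injective := by
    rintro ⟨N, M⟩ ⟨N', M'⟩ h
    obtain ⟨rfl : N = N', h⟩ := Prod.mk.inj h
    exact congrArg _ (linearForm_injective hL N h)
  simpa only [Function.comp_def] using hprod.comp_injective hinj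

lemma summable_one_div_cpow_mul_reciprocalProd (hΦ : ∀ L ∈ s, L.1 ≠ 0) (hs : 2 ≤ s.card) {z : ℂ}
    (hz : 1 < z.re) :
    Summable fun x : ℕ+ × ℤ ↦ 1 / (x.1 : ℂ) ^ z * reciprocalProd Φ s x.1 x.2 := by
  obtain ⟨n, hn⟩ := Nat.exists_eq_add_of_le' hs
  obtain ⟨L₁, t, rfl, ht⟩ := Multiset.card_eq_succ_iff.1 hn
  obtain ⟨L₂, t, rfl, -⟩ := Multiset.card_eq_succ_iff.1 ht
  simp only [Multiset.forall_mem_cons] at hΦ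
  have hsum := (summable_rpow_mul_inv_linearForm_sq hΦ.1 hz).add
    (summable_rpow_mul_inv_linearForm_sq hΦ.2.1 hz)
  refine hsum.of_norm_bounded fun x ↦ ?_
  rw [← mul_add, norm_mul, norm_div, norm_one, norm_natCast_cpow_of_pos x.1.pos]
  gcongr
  exact norm_reciprocalProd_le L₁ L₂ x.1 x.2

lemma one_div_cpow_mul_pow_mul_inv_pow (N : ℕ+) (z : ℂ) (a b : ℕ) :
    1 / (N : ℂ) ^ z * ((N : ℂ) ^ a * (N : ℂ)⁻¹ ^ b) = 1 / (N : ℂ) ^ (z + b - a) := by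
  have hN : (N : ℂ) ≠ 0 := by simp
  rw [cpow_sub _ _ hN, cpow_add _ _ hN, cpow_natCast, cpow_natCast, inv_pow]
  field_simp

lemma hasSum_pnat_of_hasSum_nat {z a : ℂ} {f : ℕ → ℂ} (hz : z ≠ 0)
    (hf : HasSum (fun n : ℕ ↦ f n * (1 / (n : ℂ) ^ z)) a) :
    HasSum (fun N : ℕ+ ↦ f N * (1 / (N : ℂ) ^ z)) a := by
  rw [hasSum_pnat_iff (f := fun n : ℕ ↦ f n * (1 / (n : ℂ) ^ z))]
  simpa [zero_cpow hz] using hf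

lemma hasSum_pnat_parity_mul_one_div_cpow {z : ℂ} (hz : 1 < z.re) (α β : ℂ) :
    HasSum (fun N : ℕ+ ↦ (α + β * (-1) ^ (N : ℕ)) * (1 / (N : ℂ) ^ z))
      (α * riemannZeta z + β * phiC z) := by
  refine hasSum_pnat_of_hasSum_nat (f := fun n ↦ α + β * (-1) ^ n) (ne_zero_of_one_lt_re hz) ?_
  simpa only [add_mul, mul_assoc] using ((hasSum_one_div_nat_cpow hz).mul_left α).add
    ((hasSum_neg_one_pow_mul_one_div_nat_cpow hz).mul_left β)

theorem exists_rat_tsum_eq_of_mem_zetaSums {B w : ℕ} {g : ℕ+ → ℤ → ℂ} (hg : g ∈ zetaSums B w) :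
    ∃ c d : ℕ → ℚ, ∀ z : ℂ, 1 < z.re →
      Summable (fun x : ℕ+ × ℤ ↦ 1 / (x.1 : ℂ) ^ z * g x.1 x.2) →
      ∑' x : ℕ+ × ℤ, 1 / (x.1 : ℂ) ^ z * g x.1 x.2 =
        ∑ k ∈ range B, riemannZeta (2 * k) *
          (c k * riemannZeta (z + w - 2 * k) + d k * phiC (z + w - 2 * k)) := by
  obtain ⟨c, d, hzero, hsum⟩ := hg
  refine ⟨c, d, fun z hz hsummable ↦ ?_⟩
  have hinner (N : ℕ+) : ∑' M : ℤ, 1 / (N : ℂ) ^ z * g N M = 1 / (N : ℂ) ^ z *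
      ∑ k ∈ range B, riemannZeta (2 * k) *
        ((c k + d k * (-1) ^ (N : ℕ)) * (N : ℂ) ^ (2 * k) * (N : ℂ)⁻¹ ^ w) := by
    have hsym : HasSum (fun M ↦ 1 / (N : ℂ) ^ z * g N M) _ (symmetricIcc ℤ) :=
      (hsummable.prod_factor N).hasSum.mono_left LeAtTop.le_atTop
    exact tendsto_nhds_unique hsym ((hsum N).mul_left _)
  have hterm (N : ℕ+) : 1 / (N : ℂ) ^ z * ∑ k ∈ range B, riemannZeta (2 * k) *
        ((c k + d k * (-1) ^ (N : ℕ)) * (N : ℂ) ^ (2 * k) * (N : ℂ)⁻¹ ^ w) =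
      ∑ k ∈ range B, riemannZeta (2 * k) *
        ((c k + d k * (-1) ^ (N : ℕ)) * (1 / (N : ℂ) ^ (z + w - 2 * k))) := by
    rw [mul_sum]
    refine sum_congr rfl fun k _ ↦ ?_
    have hpow := one_div_cpow_mul_pow_mul_inv_pow N z (2 * k) w
    push_cast at hpow
    rw [← hpow]
    ring
  have houter (k : ℕ) : HasSum (fun N : ℕ+ ↦ riemannZeta (2 * k) *
      ((c k + d k * (-1) ^ (N : ℕ)) * (1 / (N : ℂ) ^ (z + w - 2 * k))))
      (riemannZeta (2 * k) *
        (c k * riemannZeta (z + w - 2 * k) + d k * phiC (z + w - 2 * k))) := by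
    refine HasSum.mul_left _ ?_
    by_cases hk : w < 2 * k
    · simp [hzero k hk]
    · refine hasSum_pnat_parity_mul_one_div_cpow ?_ _ _
      have hkw : ((2 * k : ℕ) : ℝ) ≤ (w : ℕ) := mod_cast not_lt.1 hk
      rw [← Nat.cast_ofNat, ← Nat.cast_mul, sub_re, add_re, natCast_re, natCast_re]
      linarith
  rw [hsummable.tsum_prod]
  simp only [hinner, hterm]
  exact (hasSum_sum fun k _ ↦ houter k).tsum_eq

end Lattice

/-- The positive roots of `G₂` other than `n`, as linear forms in `(M, N) = (m, n)`; their zeros are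
the walls of the Weyl chambers. -/
def rootFormsG2 : Finset (ℤ × ℤ) := {(1, 0), (1, 1), (1, 2), (1, 3), (2, 3)}

/-- The forms in `rootFormsG2`, with multiplicities the exponents `p, q, r, u, v`. -/
def rootPowersG2 (p q r u v : ℕ) : Multiset (ℤ × ℤ) :=
  .replicate p (1, 0) + .replicate q (1, 1) + .replicate r (1, 2) + .replicate u (1, 3) +
    .replicate v (2, 3)

/-- Parametrizations by pairs `(m, n)` of positive integers of the six Weyl chambers in the
half-plane `0 < N`, in order of decreasing `M / N`. -/
def chamberPoint : Fin 6 → ℕ+ × ℕ+ → ℕ+ × ℤ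
  | 0, (m, n) => (n, m)
  | 1, (m, n) => (m + n, -m)
  | 2, (m, n) => (m + 2 * n, -(m + 3 * n))
  | 3, (m, n) => (m + 2 * n, -(2 * m + 3 * n))
  | 4, (m, n) => (m + n, -(2 * m + 3 * n))
  | 5, (m, n) => (n, -(m + 3 * n))

section RootSystemG2

variable {p q r u v : ℕ}

lemma fst_eq_one_or_two_of_mem_rootFormsG2 : ∀ L ∈ rootFormsG2, L.1 = 1 ∨ L.1 = 2 := by
  decide

lemma pairwise_rootFormsG2 :
    (rootFormsG2 : Set (ℤ × ℤ)).Pairwise fun L₁ L₂ ↦ L₁.1 * L₂.2 ≠ L₁.2 * L₂.1 := by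
  have h : ∀ L₁ ∈ rootFormsG2, ∀ L₂ ∈ rootFormsG2, L₁ ≠ L₂ → L₁.1 * L₂.2 ≠ L₁.2 * L₂.1 := by
    decide
  exact fun L₁ h₁ L₂ h₂ hne ↦ h L₁ h₁ L₂ h₂ hne

lemma mem_rootFormsG2_of_mem_rootPowersG2 : ∀ L ∈ rootPowersG2 p q r u v, L ∈ rootFormsG2 := by
  intro L hL
  simp only [rootPowersG2, Multiset.mem_add, or_assoc] at hL
  rcases hL with h | h | h | h | h <;> rw [Multiset.eq_of_mem_replicate h] <;> decide

lemma card_rootPowersG2 : (rootPowersG2 p q r u v).card = p + q + r + u + v := by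
  simp only [rootPowersG2, Multiset.card_add, Multiset.card_replicate]

lemma chamberPoint_injective :
    Function.Injective fun x : Fin 6 × (ℕ+ × ℕ+) ↦ chamberPoint x.1 x.2 := by
  rintro ⟨i, m, n⟩ ⟨j, m', n'⟩ h
  obtain ⟨h₁, h₂⟩ := Prod.ext_iff.1 h
  replace h₁ := congrArg (fun N : ℕ+ ↦ (N : ℤ)) h₁
  obtain ⟨rfl, rfl, rfl⟩ : i = j ∧ m = m' ∧ n = n' := by
    have hmn := And.intro m.pos n.pos
    have hmn' := And.intro m'.pos n'.pos
    fin_cases i <;> fin_cases j <;>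
      simp only [chamberPoint, Fin.zero_eta, Fin.mk_one, Fin.reduceFinMk,
        ← PNat.coe_inj] at h₁ h₂ ⊢ <;>
      push_cast at h₁ <;> lia
  rfl

lemma exists_chamberPoint_eq {N : ℕ+} {M : ℤ} (h : ∀ L ∈ rootFormsG2, linearForm L N M ≠ 0) :
    ∃ x : Fin 6 × (ℕ+ × ℕ+), chamberPoint x.1 x.2 = (N, M) := by
  obtain ⟨h₁, h₂, h₃, h₄, h₅⟩ : M ≠ 0 ∧ M + N ≠ 0 ∧ M + 2 * N ≠ 0 ∧ M + 3 * N ≠ 0 ∧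
      2 * M + 3 * N ≠ 0 := by
    simpa [rootFormsG2, linearForm] using h
  have hN : (0 : ℤ) < N := mod_cast N.pos
  obtain ⟨i, k, l, hk, hl, h⟩ : ∃ (i : Fin 6) (k l : ℤ), 0 < k ∧ 0 < l ∧ ∀ m n : ℕ+, (m : ℤ) = k →
      (n : ℤ) = l → ((chamberPoint i (m, n)).1 : ℤ) = N ∧ (chamberPoint i (m, n)).2 = M := by
    rcases h₁.symm.lt_or_gt with h₁ | h₁
    · exact ⟨0, M, N, h₁, hN, fun m n hm hn ↦ by simp only [chamberPoint]; lia⟩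
    rcases h₂.symm.lt_or_gt with h₂ | h₂
    · exact ⟨1, -M, M + N, neg_pos.2 h₁, h₂,
        fun m n hm hn ↦ by simp only [chamberPoint]; push_cast; lia⟩
    rcases h₅.symm.lt_or_gt with h₅ | h₅
    · exact ⟨2, 2 * M + 3 * N, -(M + N), h₅, neg_pos.2 h₂,
        fun m n hm hn ↦ by simp only [chamberPoint]; push_cast; lia⟩
    rcases h₃.symm.lt_or_gt with h₃ | h₃
    · exact ⟨3, -(2 * M + 3 * N), M + 2 * N, neg_pos.2 h₅, h₃,
        fun m n hm hn ↦ by simp only [chamberPoint]; push_cast; lia⟩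
    rcases h₄.symm.lt_or_gt with h₄ | h₄
    · exact ⟨4, M + 3 * N, -(M + 2 * N), h₄, neg_pos.2 h₃,
        fun m n hm hn ↦ by simp only [chamberPoint]; push_cast; lia⟩
    · exact ⟨5, -(M + 3 * N), N, neg_pos.2 h₄, hN, fun m n hm hn ↦ by simp only [chamberPoint]; lia⟩
  lift k to ℕ+ using hk
  lift l to ℕ+ using hl
  obtain ⟨hN, hM⟩ := h k l rfl rfl
  exact ⟨(i, k, l), Prod.ext (PNat.coe_injective (mod_cast hN)) hM⟩

lemma tsum_eq_sum_tsum_chamberPoint {F : ℕ+ × ℤ → ℂ} (hF : Summable F)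
    (hwall : ∀ N M, ¬ (∀ L ∈ rootFormsG2, linearForm L N M ≠ 0) → F (N, M) = 0) :
    ∑' x, F x = ∑ i, ∑' (m : ℕ+) (n : ℕ+), F (chamberPoint i (m, n)) := by
  have hsupp : F.support ⊆ Set.range fun x : Fin 6 × (ℕ+ × ℕ+) ↦ chamberPoint x.1 x.2 := by
    rintro ⟨N, M⟩ hx
    exact exists_chamberPoint_eq (by_contra fun h ↦ hx (hwall N M h))
  have hsum : Summable fun x : Fin 6 × (ℕ+ × ℕ+) ↦ F (chamberPoint x.1 x.2) :=
    hF.comp_injective chamberPoint_injective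
  rw [← chamberPoint_injective.tsum_eq hsupp, hsum.tsum_prod, tsum_fintype]
  exact sum_congr rfl fun i _ ↦ (hsum.prod_factor i).tsum_prod

lemma one_div_cpow_mul_reciprocalProd_rootPowersG2 {N : ℕ+} {M : ℤ}
    (σ₁ σ₂ σ₃ σ₄ σ₅ : ℤˣ) (a₁ a₂ a₃ a₄ a₅ : ℕ+) (h₁ : linearForm (1, 0) N M = σ₁ * a₁)
    (h₂ : linearForm (1, 1) N M = σ₂ * a₂) (h₃ : linearForm (1, 2) N M = σ₃ * a₃)
    (h₄ : linearForm (1, 3) N M = σ₄ * a₄) (h₅ : linearForm (2, 3) N M = σ₅ * a₅) (z : ℂ) :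
    1 / (N : ℂ) ^ z * reciprocalProd rootFormsG2 (rootPowersG2 p q r u v) N M =
      ((σ₁ ^ p * σ₂ ^ q * σ₃ ^ r * σ₄ ^ u * σ₅ ^ v : ℤˣ) : ℤ) *
        (1 / ((N : ℂ) ^ z * a₁ ^ p * a₂ ^ q * a₃ ^ r * a₄ ^ u * a₅ ^ v)) := by
  have hreg : ∀ L ∈ rootFormsG2, linearForm L N M ≠ 0 := by
    simp [rootFormsG2, h₁, h₂, h₃, h₄, h₅]
  have hinv {σ : ℤˣ} {a : ℕ+} {x : ℤ} (h : x = σ * a) (n : ℕ) :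
      (x : ℂ)⁻¹ ^ n = ((σ ^ n : ℤˣ) : ℤ) * (1 / (a : ℂ) ^ n) := by
    rcases Int.units_eq_one_or σ with rfl | rfl <;> simp [h, ← inv_pow, ← mul_pow]
  rw [reciprocalProd, if_pos hreg]
  simp only [rootPowersG2, Multiset.map_add, Multiset.map_replicate, Multiset.prod_add,
    Multiset.prod_replicate, hinv h₁, hinv h₂, hinv h₃, hinv h₄, hinv h₅]
  push_cast
  ring

lemma summable_rootPowersG2 (hw : 2 ≤ p + q + r + u + v) {s : ℂ} (hs : 1 < s.re) :
    Summable fun x : ℕ+ × ℤ ↦ 1 / (x.1 : ℂ) ^ s *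
      reciprocalProd rootFormsG2 (rootPowersG2 p q r u v) x.1 x.2 := by
  refine summable_one_div_cpow_mul_reciprocalProd (fun L hL ↦ ?_) (hw.trans card_rootPowersG2.ge) hs
  have hL₁ := fst_eq_one_or_two_of_mem_rootFormsG2 L (mem_rootFormsG2_of_mem_rootPowersG2 L hL)
  lia

lemma sum_tsum_chamberPoint_eq_sum_zetaG2C (s : ℂ) :
    ∑ i, ∑' (m : ℕ+) (n : ℕ+), 1 / ((chamberPoint i (m, n)).1 : ℂ) ^ s *
        reciprocalProd rootFormsG2 (rootPowersG2 p q r u v) (chamberPoint i (m, n)).1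
          (chamberPoint i (m, n)).2 =
      zetaG2C p s q r u v + (-1 : ℂ) ^ p * zetaG2C p q s r v u +
        (-1 : ℂ) ^ (p + q) * zetaG2C v q r s p u +
        (-1 : ℂ) ^ (p + q + v) * zetaG2C v r q s u p +
        (-1 : ℂ) ^ (p + q + r + v) * zetaG2C u r s q v p +
        (-1 : ℂ) ^ (p + q + r + u + v) * zetaG2C u s r q p v := by
  simp only [Fin.sum_univ_six, zetaG2C, ← tsum_mul_left, cpow_natCast]
  iterate 5 refine congrArg₂ _ ?_ ?_
  all_goals refine tsum_congr fun m ↦ tsum_congr fun n ↦ ?_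
  · refine (one_div_cpow_mul_reciprocalProd_rootPowersG2 1 1 1 1 1
      m (m + n) (m + 2 * n) (m + 3 * n) (2 * m + 3 * n) ?_ ?_ ?_ ?_ ?_ s).trans ?_ <;>
      simp only [chamberPoint, linearForm] <;> push_cast <;> ring
  · refine (one_div_cpow_mul_reciprocalProd_rootPowersG2 (-1) 1 1 1 1
      m n (m + 2 * n) (2 * m + 3 * n) (m + 3 * n) ?_ ?_ ?_ ?_ ?_ s).trans ?_ <;>
      simp only [chamberPoint, linearForm] <;> push_cast <;> ring
  · refine (one_div_cpow_mul_reciprocalProd_rootPowersG2 (-1) (-1) 1 1 1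
      (m + 3 * n) n (m + n) (2 * m + 3 * n) m ?_ ?_ ?_ ?_ ?_ s).trans ?_ <;>
      simp only [chamberPoint, linearForm] <;> push_cast <;> ring
  · refine (one_div_cpow_mul_reciprocalProd_rootPowersG2 (-1) (-1) 1 1 (-1)
      (2 * m + 3 * n) (m + n) n (m + 3 * n) m ?_ ?_ ?_ ?_ ?_ s).trans ?_ <;>
      simp only [chamberPoint, linearForm] <;> push_cast <;> ring
  · refine (one_div_cpow_mul_reciprocalProd_rootPowersG2 (-1) (-1) (-1) 1 (-1)
      (2 * m + 3 * n) (m + 2 * n) n m (m + 3 * n) ?_ ?_ ?_ ?_ ?_ s).trans ?_ <;>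
      simp only [chamberPoint, linearForm] <;> push_cast <;> ring
  · refine (one_div_cpow_mul_reciprocalProd_rootPowersG2 (-1) (-1) (-1) (-1) (-1)
      (m + 3 * n) (m + 2 * n) (m + n) m (2 * m + 3 * n) ?_ ?_ ?_ ?_ ?_ s).trans ?_ <;>
      simp only [chamberPoint, linearForm] <;> push_cast <;> ring

theorem sum_zetaG2C_eq_tsum (hw : 2 ≤ p + q + r + u + v) {s : ℂ} (hs : 1 < s.re) :
    zetaG2C p s q r u v + (-1 : ℂ) ^ p * zetaG2C p q s r v u +
        (-1 : ℂ) ^ (p + q) * zetaG2C v q r s p u +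
        (-1 : ℂ) ^ (p + q + v) * zetaG2C v r q s u p +
        (-1 : ℂ) ^ (p + q + r + v) * zetaG2C u r s q v p +
        (-1 : ℂ) ^ (p + q + r + u + v) * zetaG2C u s r q p v =
      ∑' x : ℕ+ × ℤ, 1 / (x.1 : ℂ) ^ s *
        reciprocalProd rootFormsG2 (rootPowersG2 p q r u v) x.1 x.2 := by
  have hwall (N : ℕ+) (M : ℤ) (h : ¬ ∀ L ∈ rootFormsG2, linearForm L N M ≠ 0) :
      1 / (N : ℂ) ^ s * reciprocalProd rootFormsG2 (rootPowersG2 p q r u v) N M = 0 := by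
    rw [reciprocalProd, if_neg h, mul_zero]
  rw [tsum_eq_sum_tsum_chamberPoint (summable_rootPowersG2 hw hs) hwall,
    sum_tsum_chamberPoint_eq_sum_zetaG2C]

end RootSystemG2

theorem functional_relation_G2_I2_general (p q r u v : ℕ) (hw : 2 ≤ p + q + r + u + v) :
    ∃ c d : ℕ → ℚ, ∀ s : ℂ, 1 < s.re →
      zetaG2C p s q r u v + (-1 : ℂ) ^ p * zetaG2C p q s r v u +
          (-1 : ℂ) ^ (p + q) * zetaG2C v q r s p u +
          (-1 : ℂ) ^ (p + q + v) * zetaG2C v r q s u p +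
          (-1 : ℂ) ^ (p + q + r + v) * zetaG2C u r s q v p +
          (-1 : ℂ) ^ (p + q + r + u + v) * zetaG2C u s r q p v =
        ∑ k ∈ Finset.range ((p + q + r + u + v + 1) / 2 + 1),
          riemannZeta (2 * k) *
            ((c k : ℂ) * riemannZeta (s + (p + q + r + u + v : ℕ) - 2 * k) +
              (d k : ℂ) * phiC (s + (p + q + r + u + v : ℕ) - 2 * k)) := by
  have hcard := card_rootPowersG2 (p := p) (q := q) (r := r) (u := u) (v := v)
  have hmem : reciprocalProd rootFormsG2 (rootPowersG2 p q r u v) ∈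
      zetaSums ((p + q + r + u + v + 1) / 2 + 1) (p + q + r + u + v) := by
    rw [← hcard]
    exact reciprocalProd_mem_zetaSums fst_eq_one_or_two_of_mem_rootFormsG2 pairwise_rootFormsG2
      mem_rootFormsG2_of_mem_rootPowersG2 (by rw [← Multiset.card_pos]; lia) (by lia)
  obtain ⟨c, d, hcd⟩ := exists_rat_tsum_eq_of_mem_zetaSums hmem
  refine ⟨c, d, fun s hs ↦ ?_⟩
  rw [sum_zetaG2C_eq_tsum hw hs]
  exact hcd s hs (summable_rootPowersG2 hw hs)

theorem functional_relation_G2_I2 (p q r u v : ℕ) (hp : 0 < p) (hq : 0 < q) (hr : 0 < r)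
    (hu : 0 < u) (hv : 0 < v) :
    ∃ c d : ℕ → ℚ, ∀ s : ℂ, 1 < s.re →
      zetaG2C p s q r u v + (-1 : ℂ) ^ p * zetaG2C p q s r v u +
          (-1 : ℂ) ^ (p + q) * zetaG2C v q r s p u +
          (-1 : ℂ) ^ (p + q + v) * zetaG2C v r q s u p +
          (-1 : ℂ) ^ (p + q + r + v) * zetaG2C u r s q v p +
          (-1 : ℂ) ^ (p + q + r + u + v) * zetaG2C u s r q p v =
        ∑ k ∈ Finset.range ((p + q + r + u + v + 1) / 2 + 1),
          riemannZeta (2 * k) *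
            ((c k : ℂ) * riemannZeta (s + (p + q + r + u + v : ℕ) - 2 * k) +
              (d k : ℂ) * phiC (s + (p + q + r + u + v : ℕ) - 2 * k)) := by
  exact functional_relation_G2_I2_general p q r u v (by lia)
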